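/- For any finite set S = {S_1,…,S_K} of complex d×d matrices there exists a linear subspace E of ℂ^d that is invariant under every S_k (S_k(E) ⊆ E for all 1 ≤ k ≤ K) and a norm |·| on E such that ρ̂(S) = ρ̂(S↾E) = max_{1 ≤ k ≤ K} |S_k↾E|, where S_k↾E denotes the restriction of S_k to E, S↾E = {S_1↾E,…,S_K↾E}, and |S_k↾E| is the operator norm of S_k↾E induced by the norm |·| on E. -/

import Mathlib

open Filter MeasureTheory Topology
open scoped ENNReal

noncomputable section

/-- The one-sided shift on `Σ_K^+ = ℕ → Fin K`. -/
def shift (K : ℕ) : (ℕ → Fin K) → ℕ → Fin K := fun i n => i (n + 1)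

/-- The ordered product `S_{w 0} ⋯ S_{w (n-1)}` along a finite word `w`. -/
def finWordProd {d K : ℕ} (S : Fin K → Matrix (Fin d) (Fin d) ℂ) {n : ℕ}
    (w : Fin n → Fin K) : Matrix (Fin d) (Fin d) ℂ :=
  (List.ofFn fun t => S (w t)).prod

/-- The ordered product of the first `n` matrices along an infinite sequence. -/
def wordProd {d K : ℕ} (S : Fin K → Matrix (Fin d) (Fin d) ℂ)
    (i : ℕ → Fin K) (n : ℕ) : Matrix (Fin d) (Fin d) ℂ :=
  (List.ofFn fun t : Fin n => S (i t)).prod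

/-- The (usual) spectral radius of a complex matrix, as a real number. -/
def specRad {d : ℕ} (A : Matrix (Fin d) (Fin d) ℂ) : ℝ :=
  (spectralRadius ℂ A).toReal

/-- The generalized spectral radius of a finite family of matrices. -/
def genSpecRad {d K : ℕ} (S : Fin K → Matrix (Fin d) (Fin d) ℂ) : ℝ :=
  Filter.atTop.limsup fun n : ℕ =>
    ⨆ w : Fin n → Fin K, specRad (finWordProd S w) ^ ((n : ℝ)⁻¹)

/-- A submultiplicative matrix norm on `d × d` complex matrices. -/
structure MatrixNorm (d : ℕ) where
  N : Matrix (Fin d) (Fin d) ℂ → ℝ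
  nonneg : ∀ A, 0 ≤ N A
  definite : ∀ A, N A = 0 ↔ A = 0
  homog : ∀ (c : ℂ) (A), N (c • A) = ‖c‖ * N A
  triangle : ∀ A B, N (A + B) ≤ N A + N B
  submult : ∀ A B, N (A * B) ≤ N A * N B

/-- `μ` is extremal for `S` (w.r.t. the matrix norm `N`). -/
def IsExtremal {d K : ℕ} (S : Fin K → Matrix (Fin d) (Fin d) ℂ)
    (N : Matrix (Fin d) (Fin d) ℂ → ℝ) (μ : Measure (ℕ → Fin K)) : Prop :=
  ∀ᵐ i ∂μ, Tendsto (fun n : ℕ => N (wordProd S i n) ^ ((n : ℝ)⁻¹))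
    atTop (𝓝 (genSpecRad S))

/-- `x` is a density point of `μ`. -/
def DensityPoint {K : ℕ} (μ : Measure (ℕ → Fin K)) (x : ℕ → Fin K) : Prop :=
  ∀ U : Set (ℕ → Fin K), IsOpen U → x ∈ U → 0 < μ U

/-- `S` has the spectral finiteness property. -/
def HasFinitenessProperty {d K : ℕ} (S : Fin K → Matrix (Fin d) (Fin d) ℂ) : Prop :=
  ∃ n : ℕ, 1 ≤ n ∧ ∃ w : Fin n → Fin K,
    genSpecRad S = specRad (finWordProd S w) ^ ((n : ℝ)⁻¹)

/-- `x` is periodic of period `π ≥ 1`. -/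
def IsPeriodic {K : ℕ} (x : ℕ → Fin K) (π : ℕ) : Prop :=
  1 ≤ π ∧ ∀ n, x (n + π) = x n

/-- The operator "norm" of the matrix `A` acting on the subset `E`, induced by the
(partial) vector norm `Nv`. -/
def relOpNorm {d : ℕ} (E : Set (Fin d → ℂ)) (Nv : (Fin d → ℂ) → ℝ)
    (A : Matrix (Fin d) (Fin d) ℂ) : ℝ :=
  sInf {c : ℝ | 0 ≤ c ∧ ∀ x ∈ E, Nv (A.mulVec x) ≤ c * Nv x}

/-- The joint spectral radius of the family `S`, restricted to `E` and computed with the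
operator norm induced by `Nv` on `E`. -/
def jointSpecRadOn {d K : ℕ} (E : Set (Fin d → ℂ)) (Nv : (Fin d → ℂ) → ℝ)
    (S : Fin K → Matrix (Fin d) (Fin d) ℂ) : ℝ :=
  Filter.atTop.limsup fun n : ℕ =>
    ⨆ w : Fin n → Fin K, relOpNorm E Nv (finWordProd S w) ^ ((n : ℝ)⁻¹)

/-- The joint spectral radius of the family `S`, computed with the operator norm
induced by the sup-norm on `ℂ^d`. -/
def jointSpecRad {d K : ℕ} (S : Fin K → Matrix (Fin d) (Fin d) ℂ) : ℝ :=
  jointSpecRadOn Set.univ (fun x => ‖x‖) S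

section BoundedOrbits

variable {ι V : Type*} [NormedAddCommGroup V] [NormedSpace ℂ V]

/-- The vectors whose orbit under all products of the operators `T k` is bounded. -/
def boundedOrbits (T : ι → V →L[ℂ] V) : Submodule ℂ V where
  carrier := {x | ∃ C : ℝ, ∀ l : List ι, ‖(l.map T).prod x‖ ≤ C}
  add_mem' := by
    rintro x y ⟨C, hC⟩ ⟨D, hD⟩
    refine ⟨C + D, fun l => ?_⟩
    rw [map_add]
    exact (norm_add_le _ _).trans (add_le_add (hC l) (hD l))
  zero_mem' := ⟨0, fun l => by simp⟩
  smul_mem' := by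
    rintro c x ⟨C, hC⟩
    refine ⟨‖c‖ * C, fun l => ?_⟩
    rw [map_smul, norm_smul]
    exact mul_le_mul_of_nonneg_left (hC l) (norm_nonneg c)

theorem mem_boundedOrbits {T : ι → V →L[ℂ] V} {x : V} :
    x ∈ boundedOrbits T ↔ ∃ C : ℝ, ∀ l : List ι, ‖(l.map T).prod x‖ ≤ C := Iff.rfl

theorem prod_apply_mem_boundedOrbits {T : ι → V →L[ℂ] V} {x : V} (hx : x ∈ boundedOrbits T)
    (l : List ι) : (l.map T).prod x ∈ boundedOrbits T := by
  obtain ⟨C, hC⟩ := hx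
  refine ⟨C, fun l' => ?_⟩
  simpa using hC (l' ++ l)

/-- The supremum of the norms along the orbit of `x`. -/
def orbitNorm (T : ι → V →L[ℂ] V) (x : V) : ℝ := ⨆ l : List ι, ‖(l.map T).prod x‖

theorem norm_prod_apply_le_orbitNorm {T : ι → V →L[ℂ] V} {x : V} (hx : x ∈ boundedOrbits T)
    (l : List ι) : ‖(l.map T).prod x‖ ≤ orbitNorm T x := by
  obtain ⟨C, hC⟩ := hx
  exact le_ciSup (f := fun l : List ι => ‖(l.map T).prod x‖)
    ⟨C, by rintro _ ⟨l, rfl⟩; exact hC l⟩ l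

theorem norm_le_orbitNorm {T : ι → V →L[ℂ] V} {x : V} (hx : x ∈ boundedOrbits T) :
    ‖x‖ ≤ orbitNorm T x := by
  simpa using norm_prod_apply_le_orbitNorm hx []

theorem orbitNorm_nonneg (T : ι → V →L[ℂ] V) (x : V) : 0 ≤ orbitNorm T x :=
  Real.iSup_nonneg fun _ => norm_nonneg _

theorem orbitNorm_smul (T : ι → V →L[ℂ] V) (c : ℂ) (x : V) :
    orbitNorm T (c • x) = ‖c‖ * orbitNorm T x := by
  simp only [orbitNorm, map_smul, norm_smul]
  rw [Real.mul_iSup_of_nonneg (norm_nonneg c)]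

theorem orbitNorm_add_le {T : ι → V →L[ℂ] V} {x y : V} (hx : x ∈ boundedOrbits T)
    (hy : y ∈ boundedOrbits T) : orbitNorm T (x + y) ≤ orbitNorm T x + orbitNorm T y := by
  refine ciSup_le fun l => ?_
  rw [map_add]
  exact (norm_add_le _ _).trans
    (add_le_add (norm_prod_apply_le_orbitNorm hx l) (norm_prod_apply_le_orbitNorm hy l))

theorem orbitNorm_eq_zero_iff {T : ι → V →L[ℂ] V} {x : V} (hx : x ∈ boundedOrbits T) :
    orbitNorm T x = 0 ↔ x = 0 := by
  refine ⟨fun h => norm_le_zero_iff.1 (h ▸ norm_le_orbitNorm hx), ?_⟩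
  rintro rfl
  simp [orbitNorm]

theorem orbitNorm_apply_le {T : ι → V →L[ℂ] V} {x : V} (hx : x ∈ boundedOrbits T) (k : ι) :
    orbitNorm T (T k x) ≤ orbitNorm T x :=
  ciSup_le fun l => by simpa using norm_prod_apply_le_orbitNorm hx (l ++ [k])

/-- If long products contract the bounded orbits, then an orbit which is bounded modulo
`boundedOrbits T` is bounded. -/
theorem mem_boundedOrbits_of_forall_norm_le {T : ι → V →L[ℂ] V} {N : ℕ} (hN : 1 ≤ N) {A : ℝ}
    (hA : ∀ l : List ι, l.length ≤ N → ‖(l.map T).prod‖ ≤ A)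
    (hcontr : ∀ l : List ι, l.length = N → ∀ b ∈ boundedOrbits T,
      ‖(l.map T).prod b‖ ≤ 1 / 2 * ‖b‖)
    {P : V →L[ℂ] V} (hP : ∀ x, x - P x ∈ boundedOrbits T) {x : V} {M : ℝ}
    (hM : ∀ l : List ι, ‖P ((l.map T).prod x)‖ ≤ M) : x ∈ boundedOrbits T := by
  have hA0 : 0 ≤ A := (norm_nonneg _).trans (hA [] (by simp))
  have hM0 : 0 ≤ M := (norm_nonneg _).trans (hM [])
  refine ⟨A * ‖x‖ + M + 2 * A * M, fun l => ?_⟩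
  induction h : l.length using Nat.strong_induction_on generalizing l with
  | _ n ih =>
    rcases le_or_gt l.length N with hl | hl
    · have := ContinuousLinearMap.le_of_opNorm_le _ (hA l hl) x
      nlinarith [mul_nonneg hA0 hM0]
    · have hdrop := ih (l.drop N).length (by rw [List.length_drop]; omega) _ rfl
      have htake : (l.take N).length = N := by rw [List.length_take]; omega
      set y := ((l.drop N).map T).prod x with hy
      have hsplit : (l.map T).prod x = ((l.take N).map T).prod (y - P y)
          + ((l.take N).map T).prod (P y) := by
        rw [← map_add, sub_add_cancel, hy, ← mul_apply_eq_comp, ← List.prod_append,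
          ← List.map_append, List.take_append_drop]
      have h1 := hcontr _ htake _ (hP y)
      have h2 := ContinuousLinearMap.le_of_opNorm_le _ (hA _ htake.le) (P y)
      have h3 : ‖P y‖ ≤ M := hM _
      have h4 := norm_sub_le y (P y)
      have h5 := mul_le_mul_of_nonneg_left h3 hA0
      have h6 := mul_nonneg hA0 (norm_nonneg x)
      rw [hsplit]
      refine (norm_add_le _ _).trans ?_
      linarith

variable [FiniteDimensional ℂ V]

theorem exists_orbitNorm_le (T : ι → V →L[ℂ] V) :
    ∃ C : ℝ, 0 ≤ C ∧ ∀ x ∈ boundedOrbits T, orbitNorm T x ≤ C * ‖x‖ := by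
  have : CompleteSpace (boundedOrbits T) := FiniteDimensional.complete ℂ _
  obtain ⟨C, hC⟩ := banach_steinhaus
    (g := fun l : List ι => (l.map T).prod.comp (boundedOrbits T).subtypeL) fun x => x.2
  refine ⟨C, (norm_nonneg _).trans (hC []), fun x hx => ciSup_le fun l => ?_⟩
  exact ContinuousLinearMap.le_of_opNorm_le _ (hC l) (⟨x, hx⟩ : boundedOrbits T)

/-- If products of the `T k` grow subexponentially and long products contract the bounded
orbits, then all orbits are bounded. -/
theorem boundedOrbits_eq_top {T : ι → V →L[ℂ] V}
    (hgrowth : ∀ r : ℝ, 1 < r → ∃ C : ℝ, ∀ l : List ι, ‖(l.map T).prod‖ ≤ C * r ^ l.length)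
    {N : ℕ} (hN : 1 ≤ N)
    (hcontr : ∀ l : List ι, l.length = N → ∀ b ∈ boundedOrbits T,
      ‖(l.map T).prod b‖ ≤ 1 / 2 * ‖b‖) : boundedOrbits T = ⊤ := by
  obtain ⟨f, hf⟩ := Submodule.ClosedComplemented.of_finiteDimensional (boundedOrbits T)
  set P : V →L[ℂ] V :=
    ContinuousLinearMap.id ℂ V - (boundedOrbits T).subtypeL.comp f with hPdef
  have hP : ∀ x, x - P x ∈ boundedOrbits T := fun x => by simp [hPdef]
  have hP0 : ∀ x ∈ boundedOrbits T, P x = 0 := fun x hx => by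
    simp [hPdef, hf ⟨x, hx⟩]
  have hPT : ∀ (l : List ι) (x : V), P ((l.map T).prod (P x)) = P ((l.map T).prod x) := by
    intro l x
    have := hP0 _ (prod_apply_mem_boundedOrbits (hP x) l)
    rw [map_sub, map_sub, sub_eq_zero] at this
    exact this.symm
  have hPP : ∀ x, P (P x) = P x := fun x => by simpa using hPT [] x
  obtain ⟨A, hA⟩ : ∃ A : ℝ, ∀ l : List ι, l.length ≤ N → ‖(l.map T).prod‖ ≤ A := by
    obtain ⟨C, hC⟩ := hgrowth 2 one_lt_two
    have hC0 : 0 ≤ C := by simpa using (norm_nonneg _).trans (hC [])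
    exact ⟨C * 2 ^ N, fun l hl => (hC l).trans
      (mul_le_mul_of_nonneg_left (pow_le_pow_right₀ one_le_two hl) hC0)⟩
  have hescape : ∀ x, x ∉ boundedOrbits T → ∃ l : List ι, 2 < ‖P ((l.map T).prod x)‖ := by
    intro x hx
    by_contra! h
    exact hx (mem_boundedOrbits_of_forall_norm_le hN hA hcontr hP h)
  have hcompact : IsCompact (Metric.sphere (0 : V) 1 ∩ {x | P x = x}) := by
    have : ProperSpace V := FiniteDimensional.proper ℂ V
    exact (isCompact_sphere 0 1).inter_right (isClosed_eq P.continuous continuous_id)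
  obtain ⟨t, ht⟩ := hcompact.elim_finite_subcover
    (fun l : List ι => {x | 2 < ‖P ((l.map T).prod x)‖})
    (fun l => isOpen_lt continuous_const (by fun_prop)) (by
      rintro x ⟨hx1, hx2 : P x = x⟩
      refine Set.mem_iUnion.2 (hescape x fun hx => ?_)
      rw [hP0 x hx] at hx2
      simp [← hx2] at hx1)
  have hdouble : ∀ y, ∃ l : List ι, l.length ≤ t.sup List.length ∧
      2 * ‖P y‖ ≤ ‖P ((l.map T).prod y)‖ := by
    intro y
    by_cases hy : P y = 0
    · exact ⟨[], by simp, by simp [hy]⟩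
    have hy' : (0 : ℝ) < ‖P y‖ := norm_pos_iff.2 hy
    have hmem : ((‖P y‖⁻¹ : ℝ) : ℂ) • P y ∈ Metric.sphere (0 : V) 1 ∩ {x | P x = x} := by
      refine ⟨?_, ?_⟩
      · simp [norm_smul, hy'.ne']
      · simp only [Set.mem_ofPred_eq, map_smul, hPP]
    obtain ⟨l, hl, hl2⟩ := Set.mem_iUnion₂.1 (ht hmem)
    refine ⟨l, Finset.le_sup hl, ?_⟩
    rw [Set.mem_ofPred_eq, map_smul, map_smul, hPT, norm_smul, Complex.norm_real, norm_inv,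
      norm_norm, inv_mul_eq_div, lt_div_iff₀ hy'] at hl2
    exact hl2.le
  set m := t.sup List.length + 1 with hm
  have hiter : ∀ (x : V) (n : ℕ), ∃ l : List ι, l.length ≤ n * m ∧
      2 ^ n * ‖P x‖ ≤ ‖P ((l.map T).prod x)‖ := by
    intro x n
    induction n with
    | zero => exact ⟨[], by simp, by simp⟩
    | succ n ih =>
      obtain ⟨l, hl, hlP⟩ := ih
      obtain ⟨l', hl', hlP'⟩ := hdouble ((l.map T).prod x)
      refine ⟨l' ++ l, ?_, ?_⟩
      · rw [List.length_append, add_mul]; omega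
      · rw [List.map_append, List.prod_append, mul_apply_eq_comp, pow_succ]
        linarith
  rw [eq_top_iff]
  rintro x -
  by_contra hx
  have hPx : 0 < ‖P x‖ := by
    refine norm_pos_iff.2 fun h => hx ?_
    simpa [h] using hP x
  set r : ℝ := (3 / 2 : ℝ) ^ ((m : ℝ)⁻¹) with hr
  have hrm : r ^ m = 3 / 2 := Real.rpow_inv_natCast_pow (by norm_num) (by omega)
  have hr1 : 1 < r := Real.one_lt_rpow (by norm_num) (by positivity)
  obtain ⟨C, hC⟩ := hgrowth r hr1
  have hC0 : 0 ≤ C := by simpa using (norm_nonneg _).trans (hC [])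
  have hbound : ∀ n : ℕ, (4 / 3 : ℝ) ^ n * ‖P x‖ ≤ ‖P‖ * (C * ‖x‖) := by
    intro n
    obtain ⟨l, hl, hlP⟩ := hiter x n
    have h1 : ‖(l.map T).prod‖ ≤ C * (3 / 2) ^ n := by
      refine (hC l).trans (mul_le_mul_of_nonneg_left ?_ hC0)
      rw [← hrm, ← pow_mul, mul_comm m n]
      exact pow_le_pow_right₀ hr1.le hl
    have h2 := hlP.trans (P.le_opNorm_of_le (ContinuousLinearMap.le_of_opNorm_le _ h1 x))
    have h3 : (2 : ℝ) ^ n = (4 / 3) ^ n * (3 / 2) ^ n := by rw [← mul_pow]; norm_num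
    rw [h3] at h2
    have h4 : (0 : ℝ) < (3 / 2) ^ n := by positivity
    refine le_of_mul_le_mul_right ?_ h4
    linarith
  obtain ⟨n, hn⟩ := pow_unbounded_of_one_lt (‖P‖ * (C * ‖x‖) / ‖P x‖)
    (by norm_num : (1 : ℝ) < 4 / 3)
  rw [div_lt_iff₀ hPx] at hn
  exact (hbound n).not_gt hn

end BoundedOrbits

section JointSpectralRadius

variable {d K : ℕ}

theorem relOpNorm_nonneg (E : Set (Fin d → ℂ)) (Nv : (Fin d → ℂ) → ℝ)
    (A : Matrix (Fin d) (Fin d) ℂ) : 0 ≤ relOpNorm E Nv A :=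
  Real.sInf_nonneg fun _ hc => hc.1

theorem relOpNorm_le {E : Set (Fin d → ℂ)} {Nv : (Fin d → ℂ) → ℝ}
    {A : Matrix (Fin d) (Fin d) ℂ} {c : ℝ} (hc : 0 ≤ c)
    (h : ∀ x ∈ E, Nv (A.mulVec x) ≤ c * Nv x) : relOpNorm E Nv A ≤ c :=
  csInf_le ⟨0, fun _ hc => hc.1⟩ ⟨hc, h⟩

theorem le_relOpNorm_mul {E : Set (Fin d → ℂ)} {Nv : (Fin d → ℂ) → ℝ}
    {A : Matrix (Fin d) (Fin d) ℂ} {c : ℝ} (hc : 0 ≤ c)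
    (h : ∀ x ∈ E, Nv (A.mulVec x) ≤ c * Nv x) {x : Fin d → ℂ} (hx : x ∈ E) :
    Nv (A.mulVec x) ≤ relOpNorm E Nv A * Nv x := by
  have hclosed : IsClosed {c : ℝ | 0 ≤ c ∧ ∀ x ∈ E, Nv (A.mulVec x) ≤ c * Nv x} := by
    simp only [Set.ofPred_and, Set.ofPred_forall]
    refine isClosed_Ici.inter (isClosed_iInter fun x => isClosed_iInter fun _ => ?_)
    exact isClosed_le continuous_const (by fun_prop)
  exact (hclosed.csInf_mem ⟨c, hc, h⟩ ⟨0, fun _ hc => hc.1⟩).2 x hx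

theorem finWordProd_eq_prod_map (S : Fin K → Matrix (Fin d) (Fin d) ℂ) {n : ℕ}
    (w : Fin n → Fin K) : finWordProd S w = ((List.ofFn w).map S).prod := by
  rw [finWordProd, List.map_ofFn]; rfl

theorem le_pow_length_mul {E : Set (Fin d → ℂ)} {Nv : (Fin d → ℂ) → ℝ}
    {S : Fin K → Matrix (Fin d) (Fin d) ℂ} (hinv : ∀ k, ∀ x ∈ E, (S k).mulVec x ∈ E)
    {M : ℝ} (hM : 0 ≤ M) (hS : ∀ k, ∀ x ∈ E, Nv ((S k).mulVec x) ≤ M * Nv x)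
    (l : List (Fin K)) {x : Fin d → ℂ} (hx : x ∈ E) :
    Nv ((l.map S).prod.mulVec x) ≤ M ^ l.length * Nv x := by
  have hmem : ∀ l : List (Fin K), (l.map S).prod.mulVec x ∈ E := by
    intro l
    induction l with
    | nil => simpa using hx
    | cons k l ih => simpa [← Matrix.mulVec_mulVec] using hinv k _ ih
  induction l with
  | nil => simp
  | cons k l ih =>
    rw [List.map_cons, List.prod_cons, ← Matrix.mulVec_mulVec, List.length_cons, pow_succ',
      mul_assoc]
    exact (hS k _ (hmem l)).trans (mul_le_mul_of_nonneg_left ih hM)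

theorem iSup_relOpNorm_nonneg (E : Set (Fin d → ℂ)) (Nv : (Fin d → ℂ) → ℝ)
    (S : Fin K → Matrix (Fin d) (Fin d) ℂ) (n : ℕ) :
    0 ≤ ⨆ w : Fin n → Fin K, relOpNorm E Nv (finWordProd S w) ^ ((n : ℝ)⁻¹) :=
  Real.iSup_nonneg fun _ => Real.rpow_nonneg (relOpNorm_nonneg _ _ _) _

theorem jointSpecRadOn_nonneg (E : Set (Fin d → ℂ)) (Nv : (Fin d → ℂ) → ℝ)
    (S : Fin K → Matrix (Fin d) (Fin d) ℂ) : 0 ≤ jointSpecRadOn E Nv S := by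
  rw [jointSpecRadOn, Filter.limsup_eq]
  refine Real.sInf_nonneg fun a ha => ?_
  obtain ⟨n, hn⟩ := Filter.Eventually.exists ha
  exact (iSup_relOpNorm_nonneg E Nv S n).trans hn

theorem eventually_iSup_relOpNorm_le {E : Set (Fin d → ℂ)} {Nv : (Fin d → ℂ) → ℝ}
    {S : Fin K → Matrix (Fin d) (Fin d) ℂ} {M : ℝ} (hM : 0 ≤ M)
    (h : ∀ᶠ n : ℕ in atTop, ∀ l : List (Fin K), l.length = n → ∀ x ∈ E,
      Nv ((l.map S).prod.mulVec x) ≤ M ^ n * Nv x) :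
    ∀ᶠ n : ℕ in atTop,
      ⨆ w : Fin n → Fin K, relOpNorm E Nv (finWordProd S w) ^ ((n : ℝ)⁻¹) ≤ M := by
  filter_upwards [h, eventually_ge_atTop 1] with n hn hn1
  refine Real.iSup_le (fun w => ?_) hM
  have hle : relOpNorm E Nv (finWordProd S w) ≤ M ^ n := by
    rw [finWordProd_eq_prod_map]
    exact relOpNorm_le (pow_nonneg hM n) (hn _ (by simp))
  calc _ ≤ (M ^ n) ^ ((n : ℝ)⁻¹) :=
        Real.rpow_le_rpow (relOpNorm_nonneg _ _ _) hle (by positivity)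
    _ = M := Real.pow_rpow_inv_natCast hM (by omega)

theorem jointSpecRadOn_le {E : Set (Fin d → ℂ)} {Nv : (Fin d → ℂ) → ℝ}
    {S : Fin K → Matrix (Fin d) (Fin d) ℂ} {M : ℝ} (hM : 0 ≤ M)
    (h : ∀ᶠ n : ℕ in atTop, ∀ l : List (Fin K), l.length = n → ∀ x ∈ E,
      Nv ((l.map S).prod.mulVec x) ≤ M ^ n * Nv x) : jointSpecRadOn E Nv S ≤ M := by
  rw [jointSpecRadOn, Filter.limsup_eq]
  refine csInf_le ⟨0, fun a ha => ?_⟩ (eventually_iSup_relOpNorm_le hM h)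
  obtain ⟨n, hn⟩ := Filter.Eventually.exists ha
  exact (iSup_relOpNorm_nonneg E Nv S n).trans hn

theorem eventually_le_pow_mul_of_jointSpecRadOn_lt {E : Set (Fin d → ℂ)}
    {Nv : (Fin d → ℂ) → ℝ} (hNv : ∀ x ∈ E, 0 ≤ Nv x)
    {S : Fin K → Matrix (Fin d) (Fin d) ℂ} (hinv : ∀ k, ∀ x ∈ E, (S k).mulVec x ∈ E)
    {M : ℝ} (hM : 0 ≤ M) (hS : ∀ k, ∀ x ∈ E, Nv ((S k).mulVec x) ≤ M * Nv x)
    {r : ℝ} (hr : jointSpecRadOn E Nv S < r) :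
    ∀ᶠ n : ℕ in atTop, ∀ l : List (Fin K), l.length = n → ∀ x ∈ E,
      Nv ((l.map S).prod.mulVec x) ≤ r ^ n * Nv x := by
  have hbdd : IsBoundedUnder (· ≤ ·) atTop fun n : ℕ =>
      ⨆ w : Fin n → Fin K, relOpNorm E Nv (finWordProd S w) ^ ((n : ℝ)⁻¹) :=
    ⟨M, Filter.eventually_map.2 <| eventually_iSup_relOpNorm_le hM <|
      .of_forall fun n l hl x hx => hl ▸ le_pow_length_mul hinv hM hS l hx⟩
  filter_upwards [eventually_lt_of_limsup_lt hr hbdd, eventually_ge_atTop 1] with n hn hn1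
  rintro l rfl x hx
  refine (le_relOpNorm_mul (pow_nonneg hM l.length)
    (fun x hx => le_pow_length_mul hinv hM hS l hx) hx).trans
    (mul_le_mul_of_nonneg_right ?_ (hNv x hx))
  have hword : finWordProd S l.get = (l.map S).prod := by
    rw [finWordProd_eq_prod_map, List.ofFn_get]
  have hle : relOpNorm E Nv (l.map S).prod ^ ((l.length : ℝ)⁻¹) ≤ r := by
    refine le_trans ?_ hn.le
    rw [← hword]
    exact le_ciSup (f := fun w : Fin l.length → Fin K =>
      relOpNorm E Nv (finWordProd S w) ^ ((l.length : ℝ)⁻¹)) (Set.finite_range _).bddAbove l.get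
  calc relOpNorm E Nv (l.map S).prod
      = (relOpNorm E Nv (l.map S).prod ^ ((l.length : ℝ)⁻¹)) ^ l.length :=
        (Real.rpow_inv_natCast_pow (relOpNorm_nonneg _ _ _) (by omega)).symm
    _ ≤ r ^ l.length := pow_le_pow_left₀ (Real.rpow_nonneg (relOpNorm_nonneg _ _ _) _) hle _

/-- The operators `c⁻¹ S_k` on `ℂ^d`. -/
def rescaled (S : Fin K → Matrix (Fin d) (Fin d) ℂ) (c : ℝ) (k : Fin K) :
    (Fin d → ℂ) →L[ℂ] (Fin d → ℂ) :=
  LinearMap.toContinuousLinearMap (((c : ℂ)⁻¹ • S k).mulVecLin)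

theorem rescaled_apply (S : Fin K → Matrix (Fin d) (Fin d) ℂ) (c : ℝ) (k : Fin K)
    (x : Fin d → ℂ) : rescaled S c k x = (c : ℂ)⁻¹ • (S k).mulVec x := by
  simp [rescaled]

theorem prod_map_rescaled_apply (S : Fin K → Matrix (Fin d) (Fin d) ℂ) (c : ℝ)
    (l : List (Fin K)) (x : Fin d → ℂ) :
    (l.map (rescaled S c)).prod x = ((c : ℂ)⁻¹) ^ l.length • (l.map S).prod.mulVec x := by
  induction l with
  | nil => simp
  | cons k l ih =>
    rw [List.map_cons, List.prod_cons, mul_apply_eq_comp, ih, rescaled_apply,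
      Matrix.mulVec_smul, smul_smul, Matrix.mulVec_mulVec, List.map_cons, List.prod_cons,
      List.length_cons, pow_succ']

theorem norm_prod_map_rescaled_apply (S : Fin K → Matrix (Fin d) (Fin d) ℂ) {c : ℝ} (hc : 0 < c)
    (l : List (Fin K)) (x : Fin d → ℂ) :
    ‖(l.map (rescaled S c)).prod x‖ = ‖(l.map S).prod.mulVec x‖ / c ^ l.length := by
  rw [prod_map_rescaled_apply, norm_smul, norm_pow, norm_inv, Complex.norm_real,
    Real.norm_of_nonneg hc.le, inv_pow, inv_mul_eq_div]

theorem exists_norm_mulVec_le (S : Fin K → Matrix (Fin d) (Fin d) ℂ) :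
    ∃ M : ℝ, 0 ≤ M ∧ ∀ k, ∀ x : Fin d → ℂ, ‖(S k).mulVec x‖ ≤ M * ‖x‖ := by
  refine ⟨∑ k, ‖LinearMap.toContinuousLinearMap (S k).mulVecLin‖,
    Finset.sum_nonneg fun _ _ => norm_nonneg _, fun k x => ?_⟩
  exact ContinuousLinearMap.le_of_opNorm_le _ (Finset.single_le_sum
    (f := fun k => ‖LinearMap.toContinuousLinearMap (S k).mulVecLin‖)
    (fun _ _ => norm_nonneg _) (Finset.mem_univ k)) x

/-- Products of the rescaled operators grow at most subexponentially. -/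
theorem exists_norm_prod_rescaled_le {S : Fin K → Matrix (Fin d) (Fin d) ℂ}
    (hρ : 0 < jointSpecRad S) {r : ℝ} (hr : 1 < r) :
    ∃ C : ℝ, ∀ l : List (Fin K),
      ‖(l.map (rescaled S (jointSpecRad S))).prod‖ ≤ C * r ^ l.length := by
  obtain ⟨M, hM, hS⟩ := exists_norm_mulVec_le S
  have hlt : jointSpecRadOn Set.univ (fun x => ‖x‖) S < r * jointSpecRad S :=
    lt_mul_of_one_lt_left hρ hr
  obtain ⟨n₀, hn₀⟩ := eventually_atTop.1 <| eventually_le_pow_mul_of_jointSpecRadOn_lt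
    (fun x _ => norm_nonneg x) (fun _ _ _ => Set.mem_univ _) hM (fun k x _ => hS k x) hlt
  set a := max 1 (M / jointSpecRad S)
  have ha1 : 1 ≤ a := le_max_left _ _
  have haM : M ≤ a * jointSpecRad S := (div_le_iff₀ hρ).1 (le_max_right _ _)
  refine ⟨a ^ n₀, fun l => ContinuousLinearMap.opNorm_le_bound _ (by positivity) fun x => ?_⟩
  rw [norm_prod_map_rescaled_apply S hρ, div_le_iff₀ (by positivity)]
  rcases le_total n₀ l.length with hl | hl
  · refine (hn₀ _ hl l rfl x (Set.mem_univ x)).trans ?_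
    rw [mul_pow]
    have : r ^ l.length * jointSpecRad S ^ l.length * ‖x‖
        ≤ a ^ n₀ * (r ^ l.length * jointSpecRad S ^ l.length * ‖x‖) :=
      le_mul_of_one_le_left (by positivity) (one_le_pow₀ ha1)
    linarith
  · refine (le_pow_length_mul (E := Set.univ) (Nv := fun x => ‖x‖) (fun _ _ _ => Set.mem_univ _)
      hM (fun k x _ => hS k x) l (Set.mem_univ x)).trans ?_
    have h1 : M ^ l.length ≤ a ^ n₀ * r ^ l.length * jointSpecRad S ^ l.length := by
      calc M ^ l.length ≤ (a * jointSpecRad S) ^ l.length := pow_le_pow_left₀ hM haM _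
        _ = a ^ l.length * 1 * jointSpecRad S ^ l.length := by rw [mul_pow, mul_one]
        _ ≤ _ := by
          gcongr
          exact one_le_pow₀ hr.le
    have h2 := mul_le_mul_of_nonneg_right h1 (norm_nonneg x)
    linarith

/-- The subspace of bounded orbits carries the full joint spectral radius. -/
theorem jointSpecRad_le_jointSpecRadOn_boundedOrbits {S : Fin K → Matrix (Fin d) (Fin d) ℂ}
    (hρ : 0 < jointSpecRad S)
    (hinv : ∀ k, ∀ x ∈ boundedOrbits (rescaled S (jointSpecRad S)),
      (S k).mulVec x ∈ boundedOrbits (rescaled S (jointSpecRad S)))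
    (hle : ∀ k, ∀ x ∈ boundedOrbits (rescaled S (jointSpecRad S)),
      orbitNorm (rescaled S (jointSpecRad S)) ((S k).mulVec x)
        ≤ jointSpecRad S * orbitNorm (rescaled S (jointSpecRad S)) x) :
    jointSpecRad S ≤ jointSpecRadOn (boundedOrbits (rescaled S (jointSpecRad S)))
      (orbitNorm (rescaled S (jointSpecRad S))) S := by
  set ρ := jointSpecRad S
  set T := rescaled S ρ with hT
  by_contra! hlt
  obtain ⟨r, hr, hrρ⟩ := exists_between hlt
  have hr0 : 0 ≤ r := (jointSpecRadOn_nonneg _ _ _).trans hr.le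
  obtain ⟨s, hrs, hsρ⟩ := exists_between hrρ
  have hs0 : 0 < s := hr0.trans_lt hrs
  obtain ⟨C, hC0, hC⟩ := exists_orbitNorm_le T
  have hsmall : ∀ q : ℝ, r < q → ∀ δ : ℝ, 0 < δ → ∀ᶠ n : ℕ in atTop, C * r ^ n ≤ δ * q ^ n := by
    intro q hq δ hδ
    have hq0 : 0 < q := hr0.trans_lt hq
    have h := (tendsto_pow_atTop_nhds_zero_of_lt_one (div_nonneg hr0 hq0.le)
      ((div_lt_one hq0).2 hq)).const_mul C
    rw [mul_zero] at h
    filter_upwards [h.eventually (gt_mem_nhds hδ)] with n hn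
    rw [div_pow, mul_div_assoc', div_lt_iff₀ (by positivity)] at hn
    exact hn.le
  have hnorm : ∀ᶠ n : ℕ in atTop, ∀ l : List (Fin K), l.length = n → ∀ x ∈ boundedOrbits T,
      ‖(l.map S).prod.mulVec x‖ ≤ C * r ^ n * ‖x‖ := by
    filter_upwards [eventually_le_pow_mul_of_jointSpecRadOn_lt (fun x _ => orbitNorm_nonneg T x)
      hinv hρ.le hle hr] with n hn l hl x hx
    have hmem : (l.map S).prod.mulVec x ∈ boundedOrbits T := by
      have := Submodule.smul_mem _ ((ρ : ℂ) ^ l.length) (prod_apply_mem_boundedOrbits hx l)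
      rwa [hT, prod_map_rescaled_apply, smul_smul, ← mul_pow,
        mul_inv_cancel₀ (by exact_mod_cast hρ.ne'), one_pow, one_smul] at this
    have h1 := (norm_le_orbitNorm hmem).trans (hn l hl x hx)
    have h2 := mul_le_mul_of_nonneg_left (hC x hx) (pow_nonneg hr0 n)
    linarith
  obtain ⟨N, hN, hNρ, hN1⟩ :=
    (hnorm.and ((hsmall ρ hrρ (1 / 2) one_half_pos).and (eventually_ge_atTop 1))).exists
  have htop : boundedOrbits T = ⊤ := by
    refine boundedOrbits_eq_top (fun r hr => exists_norm_prod_rescaled_le hρ hr) hN1 ?_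
    intro l hl b hb
    rw [hT, norm_prod_map_rescaled_apply S hρ, div_le_iff₀ (by positivity), hl]
    have := mul_le_mul_of_nonneg_right hNρ (norm_nonneg b)
    linarith [hN l hl b hb]
  have : ρ ≤ s := by
    refine jointSpecRadOn_le hs0.le ?_
    filter_upwards [hnorm, hsmall s hrs 1 one_pos] with n hn hns l hl x _
    rw [one_mul] at hns
    exact (hn l hl x (htop ▸ Submodule.mem_top)).trans
      (mul_le_mul_of_nonneg_right hns (norm_nonneg x))
  exact this.not_gt hsρ

end JointSpectralRadius

/-- There always exists an invariant linear subspace `E ⊆ ℂ^d` and a norm on `E`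
which is extremal: `ρ̂(S) = ρ̂(S↾E) = max_k |S_k↾E|`. -/
theorem exists_invariant_subspace_with_extremal_norm
    {d K : ℕ} (hd : 2 ≤ d) (hK : 2 ≤ K)
    (S : Fin K → Matrix (Fin d) (Fin d) ℂ) :
    ∃ (E : Submodule ℂ (Fin d → ℂ)) (Nv : (Fin d → ℂ) → ℝ),
      (∀ k, ∀ x ∈ E, (S k).mulVec x ∈ E) ∧
      (∀ x ∈ E, 0 ≤ Nv x) ∧
      (∀ x ∈ E, (Nv x = 0 ↔ x = 0)) ∧
      (∀ (c : ℂ), ∀ x ∈ E, Nv (c • x) = ‖c‖ * Nv x) ∧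
      (∀ x ∈ E, ∀ y ∈ E, Nv (x + y) ≤ Nv x + Nv y) ∧
      jointSpecRad S = jointSpecRadOn (E : Set (Fin d → ℂ)) Nv S ∧
      jointSpecRad S = ⨆ k : Fin K, relOpNorm (E : Set (Fin d → ℂ)) Nv (S k) := by
  have hnonneg : 0 ≤ jointSpecRad S := jointSpecRadOn_nonneg _ _ _
  rcases hnonneg.eq_or_lt with hρ | hρ
  · have hzero : ∀ A : Matrix (Fin d) (Fin d) ℂ,
        relOpNorm ((⊥ : Submodule ℂ (Fin d → ℂ)) : Set (Fin d → ℂ)) (fun x => ‖x‖) A = 0 :=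
      fun A => le_antisymm (relOpNorm_le le_rfl (by simp)) (relOpNorm_nonneg _ _ _)
    refine ⟨⊥, fun x => ‖x‖, by simp, by simp, by simp, by simp, by simp, ?_, ?_⟩
    · rw [← hρ]
      refine le_antisymm (jointSpecRadOn_nonneg _ _ _) (jointSpecRadOn_le le_rfl ?_)
      exact .of_forall fun n l _ x hx => by
        rw [SetLike.mem_coe, Submodule.mem_bot] at hx
        simp [hx]
    · simp only [← hρ, hzero, Real.iSup_const_zero]
  set ρ := jointSpecRad S
  set T := rescaled S ρ with hT
  have hmulVec : ∀ k x, (S k).mulVec x = (ρ : ℂ) • T k x := by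
    intro k x
    rw [hT, rescaled_apply, smul_smul, mul_inv_cancel₀ (by exact_mod_cast hρ.ne'), one_smul]
  have hinv : ∀ k, ∀ x ∈ boundedOrbits T, (S k).mulVec x ∈ boundedOrbits T := by
    intro k x hx
    rw [hmulVec]
    exact Submodule.smul_mem _ _ (by simpa using prod_apply_mem_boundedOrbits hx [k])
  have hle : ∀ k, ∀ x ∈ boundedOrbits T,
      orbitNorm T ((S k).mulVec x) ≤ ρ * orbitNorm T x := by
    intro k x hx
    rw [hmulVec, orbitNorm_smul, Complex.norm_real, Real.norm_of_nonneg hρ.le]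
    exact mul_le_mul_of_nonneg_left (orbitNorm_apply_le hx k) hρ.le
  have hlower := jointSpecRad_le_jointSpecRadOn_boundedOrbits hρ hinv hle
  have hsup : ⨆ k, relOpNorm (boundedOrbits T : Set (Fin d → ℂ)) (orbitNorm T) (S k) ≤ ρ :=
    Real.iSup_le (fun k => relOpNorm_le hρ.le (hle k)) hρ.le
  have hmid : jointSpecRadOn (boundedOrbits T : Set (Fin d → ℂ)) (orbitNorm T) S
      ≤ ⨆ k, relOpNorm (boundedOrbits T : Set (Fin d → ℂ)) (orbitNorm T) (S k) := by
    have hnonneg : 0 ≤ ⨆ k, relOpNorm (boundedOrbits T : Set (Fin d → ℂ)) (orbitNorm T) (S k) :=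
      Real.iSup_nonneg fun k => relOpNorm_nonneg _ _ _
    refine jointSpecRadOn_le hnonneg (.of_forall fun n l hl x hx => ?_)
    rw [← hl]
    refine le_pow_length_mul hinv hnonneg (fun k y hy => ?_) l hx
    refine (le_relOpNorm_mul hρ.le (hle k) hy).trans
      (mul_le_mul_of_nonneg_right ?_ (orbitNorm_nonneg T y))
    exact le_ciSup (f := fun k => relOpNorm (boundedOrbits T : Set (Fin d → ℂ)) (orbitNorm T) (S k))
      (Set.finite_range _).bddAbove k
  exact ⟨boundedOrbits T, orbitNorm T, hinv, fun x _ => orbitNorm_nonneg T x,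
    fun x hx => orbitNorm_eq_zero_iff hx, fun c x _ => orbitNorm_smul T c x,
    fun x hx y hy => orbitNorm_add_le hx hy, le_antisymm hlower (hmid.trans hsup),
    le_antisymm (hlower.trans hmid) hsup⟩
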